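/- Let b : ℝ → ℂ be defined by b(t) = ∑_{n=0}^∞ 2^{-(n+1)} exp(-2πi · 2^{n+1} t) (a uniformly convergent series). Then for every complex number c = x + iy (with x, y ∈ ℝ), ∫_0^1 ( Re( b(t) · c ) )² dt = (x² + y²)/6. -/

import Mathlib

/-- The restriction to the unit circle (parametrized by `z = e^{2πit}`) of
`b(z) = z̄ a₁(z)`, given by the uniformly convergent series
`b(t) = ∑_{n=0}^∞ 2^{-(n+1)} e^{-2πi 2^{n+1} t}`. -/
noncomputable def circleB (t : ℝ) : ℂ :=
  ∑' n : ℕ, ((2 : ℂ) ^ (n + 1))⁻¹ *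
    Complex.exp (-2 * (Real.pi : ℂ) * Complex.I * 2 ^ (n + 1) * (t : ℂ))

lemma circleB_term_norm (n : ℕ) (t : ℝ) : ‖((2 : ℂ) ^ (n + 1))⁻¹ *
    Complex.exp (-2 * (Real.pi : ℂ) * Complex.I * 2 ^ (n + 1) * (t : ℂ))‖ = (1 / 2 : ℝ) ^ (n + 1) := by
  have : (-2 * (Real.pi : ℂ) * Complex.I * 2 ^ (n + 1) * (t : ℂ))
      = ((-2 * Real.pi * 2 ^ (n + 1) * t : ℝ) : ℂ) * Complex.I := by
    push_cast; ring
  rw [norm_mul, this, Complex.norm_exp_ofReal_mul_I]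
  simp

lemma circleB_summable_aux : Summable (fun n : ℕ => (1 / 2 : ℝ) ^ (n + 1)) :=
  (summable_nat_add_iff 1).2 (summable_geometric_of_lt_one (by norm_num) (by norm_num))

lemma circleB_continuous : Continuous circleB := by
  unfold circleB
  refine continuous_tsum (fun n => by fun_prop) circleB_summable_aux ?_
  intro n t
  exact (circleB_term_norm n t).le

lemma circleB_periodic (t : ℝ) : circleB (t + 1 / 2) = circleB t := by
  unfold circleB
  congr 1
  ext n
  congr 1
  rw [Complex.exp_eq_exp_iff_exists_int]
  refine ⟨-2 ^ n, ?_⟩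
  push_cast
  ring

lemma circleB_funeq (t : ℝ) : circleB t =
    1 / 2 * Complex.exp (((-(4 * Real.pi * t) : ℝ) : ℂ) * Complex.I) + 1 / 2 * circleB (2 * t) := by
  have hs : Summable (fun n : ℕ => ((2 : ℂ) ^ (n + 1))⁻¹ *
    Complex.exp (-2 * (Real.pi : ℂ) * Complex.I * 2 ^ (n + 1) * (t : ℂ))) :=
    Summable.of_norm_bounded circleB_summable_aux (fun n => (circleB_term_norm n t).le)
  unfold circleB
  rw [hs.tsum_eq_zero_add, ← tsum_mul_left]
  congr 1
  · norm_num
    congr 1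
    ring
  · congr 1
    ext n
    rw [pow_succ _ (n + 1), mul_inv, mul_comm _ (2 : ℂ)⁻¹, mul_assoc, one_div]
    congr 3
    push_cast
    ring

lemma shift_integral (h : ℝ → ℝ) (hp : Function.Periodic h 1) (a : ℝ) :
    ∫ t in (0 : ℝ)..1, h (t + a) = ∫ t in (0 : ℝ)..1, h t := by
  rw [intervalIntegral.integral_comp_add_right]
  have := hp.intervalIntegral_add_eq a 0
  rw [zero_add] at this
  rw [zero_add, add_comm 1 a, this]

theorem integral_sq_re_circleB_mul (x y : ℝ) :
    ∫ t in (0 : ℝ)..1, ((circleB t * ((x : ℂ) + (y : ℂ) * Complex.I)).re) ^ 2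
      = (x ^ 2 + y ^ 2) / 6 := by
  obtain ⟨f, hf⟩ : ∃ f : ℝ → ℝ, f = fun t => (circleB t * ((x : ℂ) + (y : ℂ) * Complex.I)).re :=
    ⟨_, rfl⟩
  obtain ⟨g, hg⟩ : ∃ g : ℝ → ℝ, g = fun t =>
    (x * Real.cos (4 * Real.pi * t) + y * Real.sin (4 * Real.pi * t)) / 2 := ⟨_, rfl⟩
  have hfc : Continuous f := by
    have := circleB_continuous
    rw [hf]; fun_prop
  have hgc : Continuous g := by rw [hg]; fun_prop
  have hfp : ∀ t, f (t + 1 / 2) = f t := by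
    intro t; simp only [hf, circleB_periodic]
  have hfp1 : ∀ t, f (t + 1) = f t := by
    intro t
    rw [show t + 1 = t + 1 / 2 + 1 / 2 by ring, hfp, hfp]
  have hg4 : ∀ t, g (t + 1 / 4) = - g t := by
    intro t
    simp only [hg]
    rw [show 4 * Real.pi * (t + 1 / 4) = 4 * Real.pi * t + Real.pi by ring, Real.cos_add_pi,
      Real.sin_add_pi]
    ring
  have hg1 : ∀ t, g (t + 1) = g t := by
    intro t
    rw [show t + 1 = t + 1 / 4 + 1 / 4 + 1 / 4 + 1 / 4 by ring, hg4, hg4, hg4, hg4]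
    ring
  have hg8 : ∀ t, g (t + 1 / 8) ^ 2 = (x ^ 2 + y ^ 2) / 4 - g t ^ 2 := by
    intro t
    simp only [hg]
    rw [show 4 * Real.pi * (t + 1 / 8) = 4 * Real.pi * t + Real.pi / 2 by ring,
      Real.cos_add_pi_div_two, Real.sin_add_pi_div_two]
    have := Real.sin_sq_add_cos_sq (4 * Real.pi * t)
    linear_combination (x ^ 2 + y ^ 2) / 4 * this
  have hfe : ∀ t, f t = g t + 1 / 2 * f (2 * t) := by
    intro t
    simp only [hf, hg]
    rw [circleB_funeq t, Complex.exp_mul_I, ← Complex.ofReal_cos, ← Complex.ofReal_sin,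
      Real.cos_neg, Real.sin_neg]
    simp [-Complex.ofReal_cos, -Complex.ofReal_sin]
    ring
  -- the three integrals
  have i1 : ∫ t in (0 : ℝ)..1, g t ^ 2 = (x ^ 2 + y ^ 2) / 8 := by
    have h := shift_integral (fun t => g t ^ 2) (fun t => by simp only [hg1]) (1 / 8)
    simp only [hg8] at h
    have hi : IntervalIntegrable (fun t => g t ^ 2) MeasureTheory.volume 0 1 :=
      (hgc.pow 2).intervalIntegrable _ _
    have hc : IntervalIntegrable (fun _ : ℝ => (x ^ 2 + y ^ 2) / 4) MeasureTheory.volume 0 1 :=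
      continuous_const.intervalIntegrable _ _
    rw [intervalIntegral.integral_sub hc hi] at h
    simp at h
    linarith
  have i2 : ∫ t in (0 : ℝ)..1, g t * f (2 * t) = 0 := by
    have h := shift_integral (fun t => g t * f (2 * t)) (fun t => by
      simp only [hg1]
      rw [show 2 * (t + 1) = 2 * t + 1 + 1 by ring, hfp1, hfp1]) (1 / 4)
    have e : ∀ t, g (t + 1 / 4) * f (2 * (t + 1 / 4)) = - (g t * f (2 * t)) := by
      intro t
      rw [hg4, show 2 * (t + 1 / 4) = 2 * t + 1 / 2 by ring, hfp]
      ring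
    simp only [e, intervalIntegral.integral_neg] at h
    linarith
  have i3 : ∫ t in (0 : ℝ)..1, f (2 * t) ^ 2 = ∫ t in (0 : ℝ)..1, f t ^ 2 := by
    have hi : ∀ a b : ℝ, IntervalIntegrable (fun t => f t ^ 2) MeasureTheory.volume a b :=
      fun a b => (hfc.pow 2).intervalIntegrable _ _
    rw [intervalIntegral.integral_comp_mul_left (fun t => f t ^ 2) (by norm_num : (2 : ℝ) ≠ 0)]
    have hp : Function.Periodic (fun t => f t ^ 2) 1 := fun t => by simp only [hfp1]
    have h := hp.intervalIntegral_add_eq 1 0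
    rw [← intervalIntegral.integral_add_adjacent_intervals (hi (2 * 0) 1) (hi 1 (2 * 1))]
    norm_num at h ⊢
    rw [h]
    ring
  have key : ∫ t in (0 : ℝ)..1, f t ^ 2 = (∫ t in (0 : ℝ)..1, g t ^ 2)
      + (∫ t in (0 : ℝ)..1, g t * f (2 * t)) + 1 / 4 * ∫ t in (0 : ℝ)..1, f (2 * t) ^ 2 := by
    rw [← intervalIntegral.integral_const_mul, ← intervalIntegral.integral_add,
      ← intervalIntegral.integral_add]
    · congr 1
      ext t
      rw [hfe t]
      ring
    all_goals
      apply Continuous.intervalIntegrable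
      fun_prop
  have : ∫ t in (0 : ℝ)..1, f t ^ 2 = (x ^ 2 + y ^ 2) / 6 := by
    rw [i1, i2, i3] at key
    linarith
  simpa only [hf] using this
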